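/- arXiv:2409.19433 — 3 statements merged into one kernel-verified Lean document; each statement's English description precedes it below -/
import Mathlib

section
/- Let E be a real inner product space, let a ∈ E with a ≠ 0, and let p, x ∈ E be such that x − p is not a scalar multiple of a. Set y* = x − (⟪a, x − p⟫ / ‖a‖²) • a. Then y* lies in the hyperplane H = {y ∈ E : ⟪a, y − p⟫ = 0}, y* ≠ p, and for every y ∈ H with y ≠ p one has ⟪x − p, y − p⟫ / (‖x − p‖ · ‖y − p‖) ≤ ⟪x − p, y* − p⟫ / (‖x − p‖ · ‖y* − p‖). That is, among points of the hyperplane distinct from p, the orthogonal projection y* maximizes the cosine of the angle at p between x − p and y − p. -/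
open RealInnerProductSpace

/-- **The orthogonal projection maximizes the cosine of the angle at `p`.**
If `x - p` is not a scalar multiple of `a ≠ 0`, then
`y* = x - (⟪a, x - p⟫ / ‖a‖²) • a` lies in the hyperplane
`H = {y | ⟪a, y - p⟫ = 0}`, satisfies `y* ≠ p`, and maximizes
`⟪x - p, y - p⟫ / (‖x - p‖ ⬝ ‖y - p‖)` over `y ∈ H`, `y ≠ p`. -/
theorem projection_maximizes_cosine
    {E : Type*} [NormedAddCommGroup E] [InnerProductSpace ℝ E]
    (a p x : E) (ha : a ≠ 0) (hxp : ∀ c : ℝ, x - p ≠ c • a)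
    (ystar : E) (hystar : ystar = x - (⟪a, x - p⟫ / ‖a‖ ^ 2) • a) :
    ⟪a, ystar - p⟫ = 0 ∧ ystar ≠ p ∧
      ∀ y : E, ⟪a, y - p⟫ = 0 → y ≠ p →
        ⟪x - p, y - p⟫ / (‖x - p‖ * ‖y - p‖) ≤
          ⟪x - p, ystar - p⟫ / (‖x - p‖ * ‖ystar - p‖) := by
  have hna : ‖a‖ ≠ 0 := norm_ne_zero_iff.mpr ha
  obtain ⟨c, hc⟩ : ∃ c : ℝ, c = ⟪a, x - p⟫ / ‖a‖ ^ 2 := ⟨_, rfl⟩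
  have hu : x - p = (ystar - p) + c • a := by
    rw [hystar, ← hc]; abel
  have h1 : ⟪a, ystar - p⟫ = 0 := by
    have h : ystar - p = (x - p) - c • a := by rw [hu]; abel
    rw [h, inner_sub_right, inner_smul_right, real_inner_self_eq_norm_sq, hc]
    field_simp
    ring
  have h2 : ystar ≠ p := by
    intro h
    apply hxp c
    rw [hu, h]; simp
  have key : ∀ y : E, ⟪a, y - p⟫ = 0 → ⟪x - p, y - p⟫ = ⟪ystar - p, y - p⟫ := by
    intro y hy
    rw [hu, inner_add_left, inner_smul_left, hy]; simp
  refine ⟨h1, h2, fun y hy hyp => ?_⟩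
  have hX : 0 < ‖x - p‖ := by
    rw [norm_pos_iff]
    intro h
    exact hxp 0 (by simpa using h)
  have hY : 0 < ‖y - p‖ := norm_pos_iff.mpr (sub_ne_zero.mpr hyp)
  have hS : 0 < ‖ystar - p‖ := norm_pos_iff.mpr (sub_ne_zero.mpr h2)
  rw [key y hy, key ystar h1, real_inner_self_eq_norm_sq,
    div_le_div_iff₀ (mul_pos hX hY) (mul_pos hX hS)]
  have hcs := real_inner_le_norm (ystar - p) (y - p)
  calc _ ≤ (‖ystar - p‖ * ‖y - p‖) * (‖x - p‖ * ‖ystar - p‖) :=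
        mul_le_mul_of_nonneg_right hcs (mul_pos hX hS).le
    _ = _ := by ring
end

section
/- Let E be a real inner product space, let a ∈ E with a ≠ 0, and let p, x ∈ E be such that x − p is not a scalar multiple of a. Set y* = x − (⟪a, x − p⟫ / ‖a‖²) • a, and let ∠ denote the angle between x − p and y* − p, defined by cos ∠ = ⟪x − p, y* − p⟫/(‖x − p‖·‖y* − p‖) with ∠ ∈ [0, π]. Then sin(∠) · ‖x − p‖ = |⟪a, x − p⟫| / ‖a‖. In particular, the sine of the angle at the maximizing point times the distance from x to p equals the margin distance from x to the hyperplane {y : ⟪a, y − p⟫ = 0}. -/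
open RealInnerProductSpace

/-- **Trigonometric reformulation of the Euclidean margin distance.**
With `y* = x - (⟪a, x - p⟫ / ‖a‖²) • a` and the angle `∠ ∈ [0, π]` between
`x - p` and `y* - p` given by
`∠ = arccos (⟪x - p, y* - p⟫ / (‖x - p‖ ⬝ ‖y* - p‖))`, one has
`sin ∠ ⬝ ‖x - p‖ = |⟪a, x - p⟫| / ‖a‖`. -/
theorem sin_angle_mul_dist_eq_margin_distance
    {E : Type*} [NormedAddCommGroup E] [InnerProductSpace ℝ E]
    (a p x : E) (ha : a ≠ 0) (hxp : ∀ c : ℝ, x - p ≠ c • a)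
    (ystar : E) (hystar : ystar = x - (⟪a, x - p⟫ / ‖a‖ ^ 2) • a)
    (angle : ℝ)
    (hangle : angle =
      Real.arccos (⟪x - p, ystar - p⟫ / (‖x - p‖ * ‖ystar - p‖))) :
    Real.sin angle * ‖x - p‖ = |⟪a, x - p⟫| / ‖a‖ := by
  have hna : 0 < ‖a‖ := norm_pos_iff.mpr ha
  have hw : ystar - p = (x - p) - (⟪a, x - p⟫ / ‖a‖ ^ 2) • a := by
    rw [hystar]; abel
  have hwpos : 0 < ‖ystar - p‖ := by
    rw [norm_pos_iff, hw]
    exact sub_ne_zero.mpr (hxp _)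
  rw [hangle, Real.sin_arccos]
  generalize ystar - p = w at *
  have hupos : 0 < ‖x - p‖ := by
    rw [norm_pos_iff]
    have h0 := hxp 0
    rwa [zero_smul] at h0
  clear hxp hystar hangle
  generalize x - p = u at *
  have h1 : ⟪u, w⟫ = ‖u‖ ^ 2 - ⟪a, u⟫ ^ 2 / ‖a‖ ^ 2 := by
    rw [hw, inner_sub_right, inner_smul_right, real_inner_self_eq_norm_sq, real_inner_comm a u]
    ring
  have h2 : ‖w‖ ^ 2 = ‖u‖ ^ 2 - ⟪a, u⟫ ^ 2 / ‖a‖ ^ 2 := by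
    rw [hw, norm_sub_sq_real, inner_smul_right, real_inner_comm a u, norm_smul, mul_pow,
      Real.norm_eq_abs, sq_abs]
    field_simp
    ring
  have h3 : ⟪u, w⟫ / (‖u‖ * ‖w‖) = ‖w‖ / ‖u‖ := by
    rw [h1, ← h2]
    field_simp
  have h4 : 1 - (‖w‖ / ‖u‖) ^ 2 = (|⟪a, u⟫| / ‖a‖ / ‖u‖) ^ 2 := by
    rw [div_pow, h2, div_pow, div_pow, sq_abs]
    field_simp
    ring
  rw [h3, h4, Real.sqrt_sq (by positivity)]
  field_simp
end

section
/- Let P be an n × n real symmetric positive definite matrix, and let V, G, H, K be n × n real matrices. Suppose X, G′, Y are n × n real matrices satisfying the Lyapunov equations X·P + P·X = V, G′·P + P·G′ = G, and Y·P + P·Y = K − X·H − H·X. Then trace(G·Y) = trace(G′·K) − trace((X·G′ + G′·X)·H). Consequently, if G is the gradient of a loss with respect to X = L_P[V], then the gradients with respect to V and P are L_P[G] and −X·L_P[G] − L_P[G]·X, respectively. -/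
open Matrix

/-- **Backpropagation of the Lyapunov operator.**
With `X·P + P·X = V`, `G′·P + P·G′ = G` (i.e. `G′ = L_P[G]`), and
`Y·P + P·Y = K − X·H − H·X`, one has
`tr(G·Y) = tr(G′·K) − tr((X·G′ + G′·X)·H)`; hence the gradients w.r.t. `V`
and `P` are `L_P[G]` and `−X·L_P[G] − L_P[G]·X`. -/
theorem lyapunov_backprop
    (n : ℕ) (P V G H K X G' Y : Matrix (Fin n) (Fin n) ℝ)
    (hP : P.PosDef)
    (hX : X * P + P * X = V)
    (hG' : G' * P + P * G' = G)
    (hY : Y * P + P * Y = K - X * H - H * X) :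
    (G * Y).trace = (G' * K).trace - ((X * G' + G' * X) * H).trace := by
  have h1 : (P * G' * Y).trace = (G' * (Y * P)).trace := by
    rw [Matrix.mul_assoc, Matrix.trace_mul_comm, Matrix.mul_assoc]
  have h2 : (G' * (H * X)).trace = (X * G' * H).trace := by
    rw [← Matrix.mul_assoc, Matrix.trace_mul_comm, Matrix.mul_assoc]
  have h3 : (G * Y).trace = (G' * (Y * P + P * Y)).trace := by
    rw [← hG', Matrix.add_mul, Matrix.trace_add, h1, Matrix.mul_add, Matrix.trace_add,
      Matrix.mul_assoc, add_comm]
  rw [h3, hY, Matrix.mul_sub, Matrix.mul_sub, Matrix.trace_sub, Matrix.trace_sub, h2,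
    Matrix.add_mul, Matrix.trace_add, Matrix.mul_assoc G' X H]
  ring
end
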